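/- arXiv:2605.24745 — 2 statements merged into one kernel-verified Lean document; each statement's English description precedes it below -/
import Mathlib

section
/- For every real β, ∫_{-∞}^{∞} cos(βξ) sech⁴(ξ) dξ = πβ(β²+4) / (6 sinh(πβ/2)), where the right-hand side is interpreted as its limit 4/3 when β = 0. -/
open Real MeasureTheory

noncomputable def sech (x : ℝ) : ℝ := (Real.cosh x)⁻¹

theorem integrable_and_integral_sigmoid_cpow_mul {u v : ℂ} (hu : 0 < u.re) (hv : 0 < v.re) :
    Integrable (fun t : ℝ => (sigmoid t : ℂ) ^ u * (sigmoid (-t) : ℂ) ^ v) ∧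
      ∫ t : ℝ, (sigmoid t : ℂ) ^ u * (sigmoid (-t) : ℂ) ^ v = Complex.betaIntegral u v := by
  set F : ℝ → ℂ := fun x => (x : ℂ) ^ (u - 1) * (1 - (x : ℂ)) ^ (v - 1) with hF
  have hderiv : ∀ t ∈ Set.univ, HasDerivWithinAt sigmoid (sigmoid t * (1 - sigmoid t)) Set.univ t :=
    fun t _ => (hasDerivAt_sigmoid t).hasDerivWithinAt
  have himage : sigmoid '' Set.univ = Set.Ioo 0 1 := by rw [Set.image_univ, range_sigmoid]
  have hpoint : (fun t : ℝ => (sigmoid t : ℂ) ^ u * (sigmoid (-t) : ℂ) ^ v) =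
      fun t => |sigmoid t * (1 - sigmoid t)| • F (sigmoid t) := by
    funext t
    have h0 := sigmoid_pos t
    have h1 := sigmoid_pos (-t)
    rw [← sigmoid_neg, abs_of_pos (mul_pos h0 h1), hF]
    have h2 : (1 : ℂ) - (sigmoid t : ℂ) = (sigmoid (-t) : ℂ) := by
      rw [sigmoid_neg]; push_cast; rfl
    have h0' : (sigmoid t : ℂ) ≠ 0 := by exact_mod_cast h0.ne'
    have h1' : (sigmoid (-t) : ℂ) ≠ 0 := by exact_mod_cast h1.ne'
    simp only [h2, Complex.real_smul, Complex.ofReal_mul, Complex.cpow_sub _ _ h0',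
      Complex.cpow_sub _ _ h1', Complex.cpow_one]
    field_simp
  have hint : IntegrableOn F (Set.Ioo 0 1) :=
    (((intervalIntegrable_iff_integrableOn_Ioc_of_le zero_le_one).1
      (Complex.betaIntegral_convergent hu hv))).mono_set Set.Ioo_subset_Ioc_self
  rw [hpoint]
  constructor
  · rw [← integrableOn_univ, ← integrableOn_image_iff_integrableOn_abs_deriv_smul
      MeasurableSet.univ hderiv sigmoid_injective.injOn, himage]
    exact hint
  · rw [← setIntegral_univ, ← integral_image_eq_integral_abs_deriv_smul
      MeasurableSet.univ hderiv sigmoid_injective.injOn, himage, Complex.betaIntegral,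
      intervalIntegral.integral_of_le zero_le_one, integral_Ioc_eq_integral_Ioo]

theorem sigmoid_mul_sigmoid_neg_two_mul (x : ℝ) :
    sigmoid (2 * x) * sigmoid (-(2 * x)) = sech x ^ 2 / 4 := by
  have h : rexp (2 * x) = rexp x ^ 2 := by rw [← Real.exp_nat_mul]; norm_num
  rw [sigmoid_def, sigmoid_def, sech, Real.cosh_eq, neg_neg, Real.exp_neg, Real.exp_neg, h]
  have := Real.exp_pos x
  field_simp
  ring

theorem sigmoid_cpow_mul_sigmoid_neg_cpow (t : ℝ) (z : ℂ) :
    (sigmoid t : ℂ) ^ (2 + z) * (sigmoid (-t) : ℂ) ^ (2 - z) =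
      ((sigmoid t * sigmoid (-t)) ^ 2 : ℝ) * Complex.exp (z * t) := by
  have h0 := sigmoid_pos t
  have h1 := sigmoid_pos (-t)
  have h0' : (sigmoid t : ℂ) ≠ 0 := by exact_mod_cast h0.ne'
  have h1' : (sigmoid (-t) : ℂ) ≠ 0 := by exact_mod_cast h1.ne'
  have hlog : Real.log (sigmoid (-t)) = Real.log (sigmoid t) - t := by
    rw [← sigmoid_mul_rexp_neg, Real.log_mul h0.ne' (Real.exp_ne_zero _), Real.log_exp]
    ring
  have hexp : (sigmoid t : ℂ) ^ z = (sigmoid (-t) : ℂ) ^ z * Complex.exp (z * t) := by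
    rw [Complex.cpow_def_of_ne_zero h0', Complex.cpow_def_of_ne_zero h1', ← Complex.exp_add,
      ← Complex.ofReal_log h0.le, ← Complex.ofReal_log h1.le, hlog]
    congr 1
    push_cast
    ring
  have hne : (sigmoid (-t) : ℂ) ^ z ≠ 0 := by simp [Complex.cpow_eq_zero_iff, h1']
  rw [Complex.cpow_add _ _ h0', Complex.cpow_sub _ _ h1', hexp, Complex.cpow_ofNat,
    Complex.cpow_ofNat]
  push_cast
  field_simp

theorem cos_sech4_integral_eq_betaIntegral_re (β : ℝ) :
    ∫ ξ : ℝ, Real.cos (β * ξ) * (sech ξ) ^ 4 =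
      8 * (Complex.betaIntegral (2 + β / 2 * Complex.I) (2 - β / 2 * Complex.I)).re := by
  obtain ⟨hint, heq⟩ := integrable_and_integral_sigmoid_cpow_mul
    (u := 2 + β / 2 * Complex.I) (v := 2 - β / 2 * Complex.I) (by simp) (by simp)
  have hre (ξ : ℝ) : Real.cos (β * ξ) * (sech ξ) ^ 4 =
      16 * ((sigmoid (2 * ξ) : ℂ) ^ (2 + β / 2 * Complex.I) *
        (sigmoid (-(2 * ξ)) : ℂ) ^ (2 - β / 2 * Complex.I)).re := by
    rw [sigmoid_cpow_mul_sigmoid_neg_cpow, sigmoid_mul_sigmoid_neg_two_mul, Complex.re_ofReal_mul,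
      show (β / 2 * Complex.I * (2 * ξ : ℝ) : ℂ) = (β * ξ : ℝ) * Complex.I by push_cast; ring,
      Complex.exp_ofReal_mul_I_re]
    ring
  simp_rw [hre]
  rw [integral_const_mul, Measure.integral_comp_mul_left
    (fun t : ℝ => ((sigmoid t : ℂ) ^ (2 + β / 2 * Complex.I) *
        (sigmoid (-t) : ℂ) ^ (2 - β / 2 * Complex.I)).re) 2, ← heq]
  have := integral_re hint
  simp only [RCLike.re_eq_complex_re] at this
  rw [this, smul_eq_mul, abs_of_pos (by norm_num)]
  ring

theorem betaIntegral_two_add_two_sub (z : ℂ) (hz : z ≠ 0) (hre : |z.re| < 1) :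
    Complex.betaIntegral (2 + z) (2 - z) =
      z * (1 - z ^ 2) * (π / Complex.sin (π * z)) / 6 := by
  obtain ⟨h0, h1⟩ := abs_lt.1 hre
  have hadd : 1 + z ≠ 0 := fun h => by
    have := congrArg Complex.re h
    simp at this
    linarith
  have hsub : 1 - z ≠ 0 := fun h => by
    have := congrArg Complex.re h
    simp at this
    linarith
  rw [Complex.betaIntegral_eq_Gamma_mul_div _ _ (by simp; linarith) (by simp; linarith),
    ← Complex.Gamma_mul_Gamma_one_sub,
    show 2 + z = (z + 1) + 1 by ring, show 2 - z = (1 - z) + 1 by ring,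
    show z + 1 + 1 + (1 - z + 1) = (3 : ℕ) + 1 by push_cast; ring, Complex.Gamma_nat_eq_factorial,
    Complex.Gamma_add_one _ (by rwa [add_comm]), Complex.Gamma_add_one _ hz,
    Complex.Gamma_add_one _ hsub]
  norm_num [Nat.factorial]
  ring

theorem cos_sech4_integral (β : ℝ) :
    ∫ ξ : ℝ, Real.cos (β * ξ) * (sech ξ) ^ 4
      = if β = 0 then 4 / 3
        else Real.pi * β * (β ^ 2 + 4) / (6 * Real.sinh (Real.pi * β / 2)) := by
  rw [cos_sech4_integral_eq_betaIntegral_re]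
  split_ifs with hβ
  · subst hβ
    have hG2 : Complex.Gamma 2 = 1 := by simp
    have hG4 : Complex.Gamma (2 + 2) = 6 := by
      rw [show (2 + 2 : ℂ) = (3 : ℕ) + 1 by norm_num, Complex.Gamma_nat_eq_factorial]
      norm_num [Nat.factorial]
    have hB : Complex.betaIntegral 2 2 = ((1 / 6 : ℝ) : ℂ) := by
      rw [Complex.betaIntegral_eq_Gamma_mul_div _ _ (by simp) (by simp), hG2, hG4]
      norm_num
    simp only [Complex.ofReal_zero, zero_div, zero_mul, add_zero, sub_zero, hB, Complex.ofReal_re]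
    norm_num
  · have hs : Real.sinh (π * β / 2) ≠ 0 := by
      rw [Ne, Real.sinh_eq_zero]
      exact div_ne_zero (mul_ne_zero Real.pi_ne_zero hβ) two_ne_zero
    have hs' : (Real.sinh (π * β / 2) : ℂ) ≠ 0 := by exact_mod_cast hs
    have hz : (β / 2 * Complex.I : ℂ) ≠ 0 := by simp [hβ]
    have hB : Complex.betaIntegral (2 + β / 2 * Complex.I) (2 - β / 2 * Complex.I) =
        ((π * β * (β ^ 2 + 4) / (48 * Real.sinh (π * β / 2)) : ℝ) : ℂ) := by
      rw [betaIntegral_two_add_two_sub _ hz (by simp),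
        show (π * (β / 2 * Complex.I) : ℂ) = (π * β / 2 : ℝ) * Complex.I by push_cast; ring,
        Complex.sin_mul_I, ← Complex.ofReal_sinh]
      have := Complex.I_ne_zero
      rw [mul_pow, Complex.I_sq]
      push_cast at hs' ⊢
      field_simp
      ring
    rw [hB, Complex.ofReal_re]
    field_simp
    norm_num
end

section
/- For every real k, the overlap integral A₂(k) = ∫_{-∞}^{∞} sin(√2 k ξ) tanh(ξ) sech⁴(ξ) dξ equals π k²(k²+2) / (6 sinh(πk/√2)), interpreted as 0 when k = 0. -/
open Real MeasureTheory

/-- The integrand of the Beta integral after the substitution `t = sigmoid (2 * x)`. -/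
noncomputable def sigmoidBetaIntegrand (u v : ℂ) (x : ℝ) : ℂ :=
  |sigmoid (2 * x) * (1 - sigmoid (2 * x)) * 2| •
    ((sigmoid (2 * x) : ℂ) ^ (u - 1) * (1 - (sigmoid (2 * x) : ℂ)) ^ (v - 1))

lemma hasDerivAt_sigmoid_two_mul (x : ℝ) :
    HasDerivAt (fun y ↦ sigmoid (2 * y)) (sigmoid (2 * x) * (1 - sigmoid (2 * x)) * 2) x := by
  have h : HasDerivAt (fun y : ℝ ↦ 2 * y) 2 x := by
    simpa using (hasDerivAt_id x).const_mul (2 : ℝ)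
  exact (hasDerivAt_sigmoid (2 * x)).comp x h

lemma injective_sigmoid_two_mul : Function.Injective fun y : ℝ ↦ sigmoid (2 * y) := by
  intro x y h
  have := sigmoid_injective h
  linarith

lemma image_univ_sigmoid_two_mul :
    (fun y : ℝ ↦ sigmoid (2 * y)) '' Set.univ = Set.Ioo 0 1 := by
  rw [Set.image_univ, ← range_sigmoid]
  exact (mul_left_surjective₀ (two_ne_zero' ℝ)).range_comp sigmoid

lemma integrable_sigmoidBetaIntegrand {u v : ℂ} (hu : 0 < u.re) (hv : 0 < v.re) :
    Integrable (sigmoidBetaIntegrand u v) := by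
  have h := Complex.betaIntegral_convergent hu hv
  rw [intervalIntegrable_iff_integrableOn_Ioo_of_le zero_le_one, ← image_univ_sigmoid_two_mul,
    integrableOn_image_iff_integrableOn_abs_deriv_smul MeasurableSet.univ
      (fun x _ ↦ (hasDerivAt_sigmoid_two_mul x).hasDerivWithinAt)
      injective_sigmoid_two_mul.injOn, integrableOn_univ] at h
  exact h

lemma integral_sigmoidBetaIntegrand (u v : ℂ) :
    ∫ x, sigmoidBetaIntegrand u v x = Complex.betaIntegral u v := by
  rw [Complex.betaIntegral, intervalIntegral.integral_of_le zero_le_one,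
    integral_Ioc_eq_integral_Ioo, ← image_univ_sigmoid_two_mul,
    integral_image_eq_integral_abs_deriv_smul MeasurableSet.univ
      (fun x _ ↦ (hasDerivAt_sigmoid_two_mul x).hasDerivWithinAt)
      injective_sigmoid_two_mul.injOn, setIntegral_univ]
  rfl

lemma sigmoidBetaIntegrand_eq (m n : ℕ) (b x : ℝ) :
    sigmoidBetaIntegrand (m + 1 + b * Complex.I) (n + 1 - b * Complex.I) x =
      ((2 * sigmoid (2 * x) ^ (m + 1) * (1 - sigmoid (2 * x)) ^ (n + 1) : ℝ) : ℂ) *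
        Complex.exp ((2 * b * x : ℝ) * Complex.I) := by
  have h0 := sigmoid_pos (2 * x)
  have h1 : 0 < 1 - sigmoid (2 * x) := sub_pos.2 (sigmoid_lt_one _)
  have hlog : log (1 - sigmoid (2 * x)) = log (sigmoid (2 * x)) - 2 * x := by
    rw [← sigmoid_neg, ← sigmoid_mul_rexp_neg, log_mul h0.ne' (exp_pos _).ne', log_exp]
    ring
  rw [sigmoidBetaIntegrand, abs_of_pos (by positivity)]
  generalize sigmoid (2 * x) = s at *
  have h0' : (s : ℂ) ≠ 0 := by exact_mod_cast h0.ne'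
  have h1' : ((1 - s : ℝ) : ℂ) ≠ 0 := by exact_mod_cast h1.ne'
  have e : (1 : ℂ) - s = ((1 - s : ℝ) : ℂ) := by push_cast; rfl
  rw [e, show (m + 1 + b * Complex.I - 1 : ℂ) = m + b * Complex.I by ring,
    show (n + 1 - b * Complex.I - 1 : ℂ) = n + -(b * Complex.I) by ring,
    Complex.cpow_add _ _ h0', Complex.cpow_add _ _ h1', Complex.cpow_natCast,
    Complex.cpow_natCast, Complex.cpow_def_of_ne_zero h0', Complex.cpow_def_of_ne_zero h1',
    ← Complex.ofReal_log h0.le, ← Complex.ofReal_log h1.le, hlog]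
  have hexp : Complex.exp ((2 * b * x : ℝ) * Complex.I) =
      Complex.exp (log s * (b * Complex.I)) *
        Complex.exp ((log s - 2 * x : ℝ) * -(b * Complex.I)) := by
    rw [← Complex.exp_add]
    congr 1
    push_cast
    ring
  rw [hexp, Complex.real_smul]
  push_cast
  ring

lemma tanh_eq_two_mul_sigmoid_sub_one (x : ℝ) : tanh x = 2 * sigmoid (2 * x) - 1 := by
  rw [tanh_eq_sinh_div_cosh, sinh_eq, cosh_eq, sigmoid_def, show -(2 * x) = -x + -x by ring,
    exp_add, exp_neg]
  have := exp_pos x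
  field_simp
  ring

lemma sech_sq_eq (x : ℝ) : sech x ^ 2 = 4 * sigmoid (2 * x) * (1 - sigmoid (2 * x)) := by
  rw [sech, cosh_eq, sigmoid_def, show -(2 * x) = -x + -x by ring, exp_add, exp_neg]
  have := exp_pos x
  field_simp
  ring

lemma sin_mul_tanh_mul_sech_pow_four_eq (b x : ℝ) :
    sin (2 * b * x) * tanh x * sech x ^ 4 =
      (8 * (sigmoidBetaIntegrand (3 + b * Complex.I) (2 - b * Complex.I) x -
        sigmoidBetaIntegrand (2 + b * Complex.I) (3 - b * Complex.I) x)).im := by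
  have h1 := sigmoidBetaIntegrand_eq 2 1 b x
  have h2 := sigmoidBetaIntegrand_eq 1 2 b x
  norm_num only [Nat.cast_ofNat, Nat.cast_one] at h1 h2
  rw [h1, h2, show sech x ^ 4 = (sech x ^ 2) ^ 2 by ring, sech_sq_eq,
    tanh_eq_two_mul_sigmoid_sub_one]
  generalize sigmoid (2 * x) = s
  rw [← sub_mul, ← mul_assoc, ← Complex.ofReal_sub,
    show (8 : ℂ) = ((8 : ℝ) : ℂ) by norm_num, ← Complex.ofReal_mul, Complex.im_ofReal_mul,
    Complex.exp_ofReal_mul_I_im]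
  ring

lemma Gamma_two_add_mul_Gamma_two_sub {z : ℂ} (hz : z ≠ 0) (hz1 : 1 + z ≠ 0) (hz2 : 1 - z ≠ 0) :
    Complex.Gamma (2 + z) * Complex.Gamma (2 - z) =
      (1 - z ^ 2) * z * (π / Complex.sin (π * z)) := by
  rw [show 2 + z = (z + 1) + 1 by ring, show 2 - z = (1 - z) + 1 by ring,
    Complex.Gamma_add_one _ (by rwa [add_comm]), Complex.Gamma_add_one _ hz,
    Complex.Gamma_add_one _ hz2, ← Complex.Gamma_mul_Gamma_one_sub]
  ring

lemma betaIntegral_three_two_sub_two_three {z : ℂ} (hre : z.re = 0) (hz : z ≠ 0) :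
    Complex.betaIntegral (3 + z) (2 - z) - Complex.betaIntegral (2 + z) (3 - z) =
      (1 - z ^ 2) * z ^ 2 * (π / Complex.sin (π * z)) / 12 := by
  have ne_of_re {w : ℂ} (h : 0 < w.re) : w ≠ 0 := by
    rintro rfl
    simp at h
  have hG : Complex.Gamma 5 = 24 := by
    simp [Nat.factorial]
  rw [Complex.betaIntegral_eq_Gamma_mul_div _ _ (by simp [hre]) (by simp [hre]),
    Complex.betaIntegral_eq_Gamma_mul_div _ _ (by simp [hre]) (by simp [hre]),
    show 3 + z + (2 - z) = 5 by ring, show 2 + z + (3 - z) = 5 by ring, hG,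
    show 3 + z = (2 + z) + 1 by ring, show 3 - z = (2 - z) + 1 by ring,
    Complex.Gamma_add_one _ (ne_of_re (by simp [hre])),
    Complex.Gamma_add_one _ (ne_of_re (by simp [hre]))]
  linear_combination (z / 12) * Gamma_two_add_mul_Gamma_two_sub hz
    (ne_of_re (by simp [hre])) (ne_of_re (by simp [hre]))

lemma integral_sin_mul_tanh_mul_sech_pow_four {b : ℝ} (hb : b ≠ 0) :
    ∫ x : ℝ, sin (2 * b * x) * tanh x * sech x ^ 4 =
      2 * π * b ^ 2 * (1 + b ^ 2) / (3 * sinh (π * b)) := by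
  have hi1 : Integrable (sigmoidBetaIntegrand (3 + b * Complex.I) (2 - b * Complex.I)) :=
    integrable_sigmoidBetaIntegrand (by simp) (by simp)
  have hi2 : Integrable (sigmoidBetaIntegrand (2 + b * Complex.I) (3 - b * Complex.I)) :=
    integrable_sigmoidBetaIntegrand (by simp) (by simp)
  have him := integral_im (𝕜 := ℂ) ((hi1.sub hi2).const_mul 8)
  simp only [Pi.sub_apply, RCLike.im_to_complex] at him
  simp_rw [sin_mul_tanh_mul_sech_pow_four_eq]
  have hsinh : sinh (π * b) ≠ 0 := sinh_ne_zero.2 (mul_ne_zero pi_ne_zero hb)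
  have hsinh' : (sinh (π * b) : ℂ) ≠ 0 := by exact_mod_cast hsinh
  rw [him, integral_const_mul, integral_sub hi1 hi2, integral_sigmoidBetaIntegrand,
    integral_sigmoidBetaIntegrand,
    betaIntegral_three_two_sub_two_three (by simp) (by simp [hb]), ← mul_assoc (π : ℂ),
    Complex.sin_mul_I, ← Complex.ofReal_mul, ← Complex.ofReal_sinh]
  have key : (8 : ℂ) * ((1 - (b * Complex.I) ^ 2) * (b * Complex.I) ^ 2 *
      (π / (sinh (π * b) * Complex.I)) / 12) =
      ((2 * π * b ^ 2 * (1 + b ^ 2) / (3 * sinh (π * b)) : ℝ) : ℂ) * Complex.I := by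
    push_cast [-Complex.ofReal_sinh]
    field_simp
    simp only [Complex.I_sq]
    ring
  rw [key, Complex.im_ofReal_mul, Complex.I_im, mul_one]

theorem A2_overlap_closed_form (k : ℝ) :
    ∫ ξ : ℝ, Real.sin (Real.sqrt 2 * k * ξ) * Real.tanh ξ * (sech ξ) ^ 4
      = if k = 0 then 0
        else Real.pi * k ^ 2 * (k ^ 2 + 2) / (6 * Real.sinh (Real.pi * k / Real.sqrt 2)) := by
  split_ifs with hk
  · simp [hk]
  have h2 : √2 ≠ 0 := by positivity
  have hsq : √2 ^ 2 = 2 := sq_sqrt zero_le_two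
  have h := integral_sin_mul_tanh_mul_sech_pow_four (div_ne_zero hk h2)
  have hmul : 2 * (k / √2) = √2 * k := by
    field_simp
    rw [hsq]
  rw [hmul] at h
  rw [h, ← mul_div_assoc, div_pow, hsq]
  have hsinh : sinh (π * k / √2) ≠ 0 :=
    sinh_ne_zero.2 (div_ne_zero (mul_ne_zero pi_ne_zero hk) h2)
  field_simp
  ring
end
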